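/- arXiv:2201.07944 — 2 statements merged into one kernel-verified Lean document; each statement's English description precedes it below -/
import Mathlib

section
/- Let (V, ≤) be a finite partial order with a greatest element r (the root) such that for every v ∈ V the up-set {w : v ≤ w} is a chain (so (V, ≤) encodes a finite rooted tree), and let p : V → ℝ be a nonnegative weight function. Write W(u) = ∑_{v ≤ u} p(v) for the weight of the subtree rooted at u. Let r = u₀, u₁, …, u_k be any weighted heavy path from the root: u_{i+1} is a child of u_i (i.e., u_{i+1} ⋖ u_i) whose subtree weight W(u_{i+1}) is maximum among all children of u_i, and u_k has no children. Then min over 0 ≤ i ≤ k of |2·W(u_i) − W(r)| equals min over all v ∈ V of |2·W(v) − W(r)|; that is, some node on the weighted heavy path attains the minimum of |2·W(v) − W(r)| over all nodes, and hence is a middle point of the tree. -/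
open Finset Classical

/-!
Descend along a heavy path towards a node `v`. If `v` is not on the path, the two part at some
path node `z`: `v` lies below a child `x` of `z` other than the heavy child `y`. Then
`W v ≤ W x ≤ W y`, while `W v + W y ≤ W x + W y ≤ W z ≤ W r` because siblings have disjoint
subtrees. So `W v` and `W y` average to at most `W r / 2`, and the larger of the two, `W y`, is at
least as close to `W r / 2` as `W v`.
-/

section Order

variable {V : Type*} [PartialOrder V]

theorem disjoint_Iic_of_covBy_of_ne (hchain : ∀ v : V, IsChain (· ≤ ·) {w : V | v ≤ w})
    {x y z : V} (hx : x ⋖ z) (hy : y ⋖ z) (hxy : x ≠ y) :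
    Disjoint (Set.Iic x) (Set.Iic y) := by
  rw [Set.disjoint_left]
  intro v hvx hvy
  rcases hchain v hvx hvy hxy with hle | hle
  · exact hx.2 (hle.lt_of_ne hxy) hy.lt
  · exact hy.2 (hle.lt_of_ne hxy.symm) hx.lt

theorem exists_eq_or_exists_le_covBy_ne_succ [IsStronglyCoatomic V] {k : ℕ} {u : Fin (k + 1) → V}
    (hleaf : ∀ x, ¬ x ⋖ u (Fin.last k)) {v : V} (hv : v ≤ u 0) :
    (∃ i, v = u i) ∨ ∃ i : Fin k, ∃ x, v ≤ x ∧ x ⋖ u i.castSucc ∧ x ≠ u i.succ := by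
  by_contra! ⟨hne, hbranch⟩
  have hle (i : Fin (k + 1)) : v ≤ u i := by
    induction i using Fin.induction with
    | zero => exact hv
    | succ i ih =>
      obtain ⟨x, hvx, hx⟩ := exists_le_covBy_of_lt (ih.lt_of_ne (hne _))
      exact hbranch i x hvx hx ▸ hvx
  obtain ⟨x, -, hx⟩ := exists_le_covBy_of_lt ((hle (Fin.last k)).lt_of_ne (hne _))
  exact hleaf x hx

end Order

theorem abs_two_nsmul_sub_le_of_add_le {G : Type*} [AddCommGroup G] [LinearOrder G]
    [IsOrderedAddMonoid G] {a b c : G} (hab : a ≤ b) (habc : a + b ≤ c) :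
    |2 • b - c| ≤ |2 • a - c| :=
  calc |2 • b - c| = |(b - a) - (c - (a + b))| := by congr 1; abel
    _ ≤ |b - a| + |c - (a + b)| := abs_sub _ _
    _ = (b - a) + (c - (a + b)) := by
      rw [abs_of_nonneg (sub_nonneg.2 hab), abs_of_nonneg (sub_nonneg.2 habc)]
    _ = -(2 • a - c) := by abel
    _ ≤ |2 • a - c| := neg_le_abs _

section SubtreeWeight

variable {V M : Type*} [PartialOrder V] [LocallyFiniteOrderBot V] [AddCommMonoid M]

/-- The subtree weight `W(u) = ∑_{v ≤ u} p(v)`, for locally finite orders so that the sum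
is finite. -/
def subtreeWeight (p : V → M) (u : V) : M :=
  ∑ v ∈ Iic u, p v

variable [PartialOrder M] [IsOrderedAddMonoid M] {p : V → M}

theorem monotone_subtreeWeight (hp : ∀ v, 0 ≤ p v) : Monotone (subtreeWeight p) :=
  fun _ _ hab ↦ sum_le_sum_of_subset_of_nonneg (Iic_subset_Iic.2 hab) fun v _ _ ↦ hp v

theorem subtreeWeight_add_le (hp : ∀ v, 0 ≤ p v) {x y z : V} (hx : x ≤ z) (hy : y ≤ z)
    (hxy : Disjoint (Set.Iic x) (Set.Iic y)) :
    subtreeWeight p x + subtreeWeight p y ≤ subtreeWeight p z := by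
  have hdisj : Disjoint (Iic x) (Iic y) := by
    simpa only [← disjoint_coe, coe_Iic] using hxy
  calc subtreeWeight p x + subtreeWeight p y
      = ∑ v ∈ Iic x ∪ Iic y, p v := (sum_union hdisj).symm
    _ ≤ subtreeWeight p z :=
      sum_le_sum_of_subset_of_nonneg
        (union_subset (Iic_subset_Iic.2 hx) (Iic_subset_Iic.2 hy)) fun v _ _ ↦ hp v

end SubtreeWeight

section HeavyPath

variable {V G : Type*} [PartialOrder V]

/-- A weighted heavy path `u 0, …, u k` for the subtree weights `W`: each node is followed by a
child of maximum weight, and the last node is a leaf. The start `u 0` is arbitrary, so the path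
may begin at the root of any subtree. -/
structure IsHeavyPath [LE G] (W : V → G) {k : ℕ} (u : Fin (k + 1) → V) : Prop where
  succ_covBy (i : Fin k) : u i.succ ⋖ u i.castSucc
  le_succ (i : Fin k) (x : V) : x ⋖ u i.castSucc → W x ≤ W (u i.succ)
  not_covBy_last (x : V) : ¬ x ⋖ u (Fin.last k)

theorem IsHeavyPath.antitone [LE G] {W : V → G} {k : ℕ} {u : Fin (k + 1) → V}
    (hu : IsHeavyPath W u) : Antitone u :=
  Fin.antitone_iff_succ_le.2 fun i ↦ (hu.succ_covBy i).le

variable [AddCommGroup G] [LinearOrder G]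

/-- A middle point of the subtree rooted at `r`: a node `m` of it for which the weight of the
subtree at `m` differs as little as possible from the remaining weight `W r - W m`. -/
def IsMiddlePoint (W : V → G) (r m : V) : Prop :=
  m ≤ r ∧ IsMinOn (fun v ↦ |2 • W v - W r|) (Set.Iic r) m

variable [IsOrderedAddMonoid G] {W : V → G} {k : ℕ} {u : Fin (k + 1) → V}

theorem IsHeavyPath.exists_abs_two_nsmul_sub_le [IsStronglyCoatomic V] (hu : IsHeavyPath W u)
    (hmono : Monotone W) (hadd : ∀ ⦃x y z⦄, x ⋖ z → y ⋖ z → x ≠ y → W x + W y ≤ W z)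
    {v : V} (hv : v ≤ u 0) :
    ∃ i, |2 • W (u i) - W (u 0)| ≤ |2 • W v - W (u 0)| := by
  obtain ⟨i, rfl⟩ | ⟨i, x, hvx, hx, hne⟩ :=
    exists_eq_or_exists_le_covBy_ne_succ hu.not_covBy_last hv
  · exact ⟨i, le_rfl⟩
  · refine ⟨i.succ, abs_two_nsmul_sub_le_of_add_le ((hmono hvx).trans (hu.le_succ i x hx)) ?_⟩
    calc W v + W (u i.succ) ≤ W x + W (u i.succ) := by gcongr; exact hmono hvx
      _ ≤ W (u i.castSucc) := hadd hx (hu.succ_covBy i) hne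
      _ ≤ W (u 0) := hmono (hu.antitone (Fin.zero_le _))

theorem middle_point_on_weighted_heavy_path_general [IsStronglyCoatomic V] (hu : IsHeavyPath W u)
    (hmono : Monotone W) (hadd : ∀ ⦃x y z⦄, x ⋖ z → y ⋖ z → x ≠ y → W x + W y ≤ W z) :
    ∃ i, IsMiddlePoint W (u 0) (u i) := by
  obtain ⟨i, hi⟩ := Finite.exists_min fun i ↦ |2 • W (u i) - W (u 0)|
  refine ⟨i, hu.antitone (Fin.zero_le i), fun v hv ↦ ?_⟩
  obtain ⟨j, hj⟩ := hu.exists_abs_two_nsmul_sub_le hmono hadd hv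
  exact (hi j).trans hj

end HeavyPath

open Classical in
theorem middle_point_on_weighted_heavy_path
    {V : Type*} [Fintype V] [PartialOrder V] [DecidableEq V]
    (r : V) (hroot : ∀ v : V, v ≤ r)
    (hchain : ∀ v : V, IsChain (· ≤ ·) {w : V | v ≤ w})
    (p : V → ℝ) (hp : ∀ v, 0 ≤ p v)
    (W : V → ℝ)
    (hW : ∀ u : V, W u = ∑ v ∈ Finset.univ.filter (fun v => v ≤ u), p v)
    (k : ℕ) (u : Fin (k + 1) → V)
    (h0 : u 0 = r)
    (hchild : ∀ i : Fin k, u i.succ ⋖ u i.castSucc)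
    (hheavy : ∀ i : Fin k, ∀ x : V, x ⋖ u i.castSucc → W x ≤ W (u i.succ))
    (hleaf : ∀ x : V, ¬ x ⋖ u (Fin.last k)) :
    ∃ i : Fin (k + 1), ∀ v : V, |2 * W (u i) - W r| ≤ |2 * W v - W r| := by
  subst h0
  let _ : LocallyFiniteOrderBot V := .ofIic V (fun a ↦ univ.filter (· ≤ a)) (by simp)
  obtain rfl : W = subtreeWeight p := funext hW
  obtain ⟨i, -, hi⟩ := middle_point_on_weighted_heavy_path_general
    ⟨hchild, hheavy, hleaf⟩ (monotone_subtreeWeight hp) fun _ _ _ hx hy hxy ↦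
      subtreeWeight_add_le hp hx.le hy.le (disjoint_Iic_of_covBy_of_ne hchain hx hy hxy)
  simp only [isMinOn_iff, nsmul_eq_mul, Nat.cast_ofNat] at hi
  exact ⟨i, fun v ↦ hi v (hroot v)⟩
end

section
/- Let n ≥ 1 and ℓ : Fin n → ℕ satisfy the Kraft inequality ∑_{i} (1/2)^{ℓ(i)} ≤ 1. Then ∑_i ℓ(i) ≥ n · log₂ n (as real numbers). -/
/-!
The numbers `q i = b ^ (-ℓ i)` have sum at most `1`. Comparing them with the uniform distribution
by Gibbs' inequality shows that the average of `ℓ i = -logb b (q i)` is at least the entropy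
`logb b n` of that distribution.
-/

open Finset Real

section Kraft

variable {ι : Type*} {s : Finset ι} {b : ℝ} {p q ℓ : ι → ℝ}

theorem mul_log_sub_mul_log_le_sub {x y : ℝ} (hx : 0 ≤ x) (hy : 0 < y) :
    x * log y - x * log x ≤ y - x := by
  rcases hx.eq_or_lt with rfl | hx
  · simpa using hy.le
  calc x * log y - x * log x = x * log (y / x) := by rw [log_div hy.ne' hx.ne', mul_sub]
    _ ≤ x * (y / x - 1) := by gcongr; exact log_le_sub_one_of_pos (div_pos hy hx)
    _ = y - x := by field_simp

theorem gibbs_inequality (hp : ∀ i ∈ s, 0 ≤ p i) (hq : ∀ i ∈ s, 0 < q i)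
    (hqp : ∑ i ∈ s, q i ≤ ∑ i ∈ s, p i) :
    ∑ i ∈ s, p i * log (q i) ≤ ∑ i ∈ s, p i * log (p i) := by
  rw [← sub_nonpos, ← sum_sub_distrib]
  calc ∑ i ∈ s, (p i * log (q i) - p i * log (p i)) ≤ ∑ i ∈ s, (q i - p i) :=
        sum_le_sum fun i hi ↦ mul_log_sub_mul_log_le_sub (hp i hi) (hq i hi)
    _ = ∑ i ∈ s, q i - ∑ i ∈ s, p i := sum_sub_distrib ..
    _ ≤ 0 := sub_nonpos.2 hqp

theorem sum_negMulLog_le_of_kraft (hb : 0 < b) (hp : ∀ i ∈ s, 0 ≤ p i) (hp1 : ∑ i ∈ s, p i = 1)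
    (hkraft : ∑ i ∈ s, b ^ (-ℓ i) ≤ 1) :
    ∑ i ∈ s, negMulLog (p i) ≤ (∑ i ∈ s, p i * ℓ i) * log b := by
  have gibbs : ∑ i ∈ s, p i * log (b ^ (-ℓ i)) ≤ ∑ i ∈ s, p i * log (p i) :=
    gibbs_inequality hp (fun i _ ↦ rpow_pos_of_pos hb _) (hkraft.trans_eq hp1.symm)
  simp only [log_rpow hb, neg_mul, mul_neg, ← mul_assoc, sum_neg_distrib, ← sum_mul] at gibbs
  simp only [negMulLog, neg_mul, sum_neg_distrib]
  exact neg_le.1 gibbs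

theorem kraft_total_depth_lower_bound_general (hb : 1 < b)
    (hkraft : ∑ i ∈ s, b ^ (-ℓ i) ≤ 1) : #s * logb b #s ≤ ∑ i ∈ s, ℓ i := by
  rcases s.eq_empty_or_nonempty with rfl | hs
  · simp
  have hcard : (0 : ℝ) < #s := mod_cast hs.card_pos
  have uniform : ∑ _i ∈ s, negMulLog (#s : ℝ)⁻¹ ≤ (∑ i ∈ s, (#s : ℝ)⁻¹ * ℓ i) * log b :=
    sum_negMulLog_le_of_kraft (zero_lt_one.trans hb) (fun _ _ ↦ by positivity)
      (by simp [hcard.ne']) hkraft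
  have entropy : ∑ _i ∈ s, negMulLog (#s : ℝ)⁻¹ = log #s := by
    simp [negMulLog, hcard.ne']
  rw [entropy, ← mul_sum, ← div_le_iff₀ (log_pos hb)] at uniform
  exact (le_inv_mul_iff₀ hcard).1 uniform

end Kraft

theorem kraft_total_depth_lower_bound (n : ℕ) (hn : 1 ≤ n) (ℓ : Fin n → ℕ)
    (hkraft : ∑ i : Fin n, ((1 : ℝ) / 2) ^ (ℓ i) ≤ 1) :
    (n : ℝ) * Real.logb 2 n ≤ ∑ i : Fin n, (ℓ i : ℝ) := by
  simpa using kraft_total_depth_lower_bound_general (s := univ) (ℓ := fun i ↦ (ℓ i : ℝ))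
    one_lt_two (by simpa [rpow_neg] using hkraft)
end
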